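/- arXiv:2001.04207 — 2 statements merged into one kernel-verified Lean document; each statement's English description precedes it below -/
import Mathlib

section
/- Let 1 ≤ p₁, p₂, q₁, q₂ < ∞, let B ⊆ ℕ × ℕ be a block and let E₁, E₂, F be Banach spaces. Call a continuous bilinear operator S : E₁ × E₂ → F summing if there exists C ≥ 0 such that ( Σ_{j=0}^∞ ( Σ_{k ∈ B^j} ‖S(x_j, y_k)‖^{q₂} )^{q₁/q₂} )^{1/q₁} ≤ C · ‖(x_j)‖_{w,p₁} · ‖(y_k)‖_{w,p₂} for all weakly p₁-summable (x_j) in E₁ and weakly p₂-summable (y_k) in E₂, and let π(S) denote the least such constant C. Let (T_m) be a sequence of summing continuous bilinear operators from E₁ × E₂ to F that is Cauchy for π, i.e., for every ε > 0 there is N such that for all m, l ≥ N the operator T_m − T_l is summing and π(T_m − T_l) ≤ ε. Then there exists a summing continuous bilinear operator T : E₁ × E₂ → F such that π(T_m − T) → 0 as m → ∞. -/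
/-!
Completeness of the space of summing bilinear operators.

Because the block `B` contains a point `(j₀, k₀)`, testing the summing inequality on sequences
supported at `j₀` and at `k₀` gives `‖S‖ ≤ π(S)` (`SummingBound.opNorm_le`). Hence a `π`-Cauchy
sequence is Cauchy in operator norm and has a limit `T₀`. Summing bounds are stable under pointwise
limits by Fatou's lemma for the two nested sums (`SummingBound.of_tendsto`), so letting `l → ∞` in
the bounds for `T m - T l` bounds `T m - T₀` by the same constant. Finally
`T₀ = (T₀ - T m) + T m` is summing by a quasi-triangle inequality for the mixed power sum
(`SummingBound.add`); no sharp constant is needed there.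

All estimates are carried out for the `ℝ≥0∞`-valued power sum `mixedSum`, where summability is
automatic; `summing_iff_ennreal` translates to and from the real-valued formulation.
-/

/-- The weak `ℓ_p` norm of a sequence `x` in a normed space `E` over `𝕜`:
the supremum over functionals `φ` in the closed unit ball of the dual of
`(∑_j ‖φ(x_j)‖^p)^(1/p)`. -/
noncomputable def weakNorm (𝕜 : Type*) [RCLike 𝕜] {E : Type*} [NormedAddCommGroup E]
    [NormedSpace 𝕜 E] (p : ℝ) (x : ℕ → E) : ℝ :=
  ⨆ φ : {φ : E →L[𝕜] 𝕜 // ‖φ‖ ≤ 1}, (∑' j, ‖φ.1 (x j)‖ ^ p) ^ (1 / p)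

/-- A sequence `x` in a normed space `E` over `𝕜` is weakly `p`-summable if
`(φ(x_j))_j ∈ ℓ_p` for every continuous linear functional `φ`. -/
def WeaklySummable (𝕜 : Type*) [RCLike 𝕜] {E : Type*} [NormedAddCommGroup E]
    [NormedSpace 𝕜 E] (p : ℝ) (x : ℕ → E) : Prop :=
  ∀ φ : E →L[𝕜] 𝕜, Summable fun j => ‖φ (x j)‖ ^ p

variable {𝕜 E₁ E₂ F : Type*} [RCLike 𝕜]
  [NormedAddCommGroup E₁] [NormedSpace 𝕜 E₁]
  [NormedAddCommGroup E₂] [NormedSpace 𝕜 E₂]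
  [NormedAddCommGroup F] [NormedSpace 𝕜 F]

/-- A continuous bilinear operator `S` is `(B; ℓ_{p₁}^w, ℓ_{p₂}^w; ℓ_{q₁}, ℓ_{q₂})`-summing
if there is `C ≥ 0` such that for all weakly `p₁`- and `p₂`-summable input sequences the
anisotropic block sums converge and the resulting mixed norm is at most
`C` times the product of the weak norms. -/
def IsSumming (p₁ p₂ q₁ q₂ : ℝ) (B : Set (ℕ × ℕ))
    (S : E₁ →L[𝕜] E₂ →L[𝕜] F) : Prop :=
  ∃ C : ℝ, 0 ≤ C ∧ ∀ (x : ℕ → E₁) (y : ℕ → E₂),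
    WeaklySummable 𝕜 p₁ x → WeaklySummable 𝕜 p₂ y →
    (∀ j, Summable fun k : {k : ℕ // (j, k) ∈ B} => ‖S (x j) (y k.1)‖ ^ q₂) ∧
      (Summable fun j =>
        (∑' k : {k : ℕ // (j, k) ∈ B}, ‖S (x j) (y k.1)‖ ^ q₂) ^ (q₁ / q₂)) ∧
      (∑' j, (∑' k : {k : ℕ // (j, k) ∈ B}, ‖S (x j) (y k.1)‖ ^ q₂) ^ (q₁ / q₂)) ^ (1 / q₁)
        ≤ C * weakNorm 𝕜 p₁ x * weakNorm 𝕜 p₂ y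

/-- The summing norm `π(S)`: the least constant `C` witnessing that `S` is summing. -/
noncomputable def summingNorm (p₁ p₂ q₁ q₂ : ℝ) (B : Set (ℕ × ℕ))
    (S : E₁ →L[𝕜] E₂ →L[𝕜] F) : ℝ :=
  sInf {C : ℝ | 0 ≤ C ∧ ∀ (x : ℕ → E₁) (y : ℕ → E₂),
    WeaklySummable 𝕜 p₁ x → WeaklySummable 𝕜 p₂ y →
    (∀ j, Summable fun k : {k : ℕ // (j, k) ∈ B} => ‖S (x j) (y k.1)‖ ^ q₂) ∧
      (Summable fun j =>
        (∑' k : {k : ℕ // (j, k) ∈ B}, ‖S (x j) (y k.1)‖ ^ q₂) ^ (q₁ / q₂)) ∧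
      (∑' j, (∑' k : {k : ℕ // (j, k) ∈ B}, ‖S (x j) (y k.1)‖ ^ q₂) ^ (q₁ / q₂)) ^ (1 / q₁)
        ≤ C * weakNorm 𝕜 p₁ x * weakNorm 𝕜 p₂ y}

open scoped ENNReal
open Filter Topology

/-! ### Nested sums in `ℝ≥0∞` -/

/-- The real-valued formulation of the summing inequality (convergence of all sums together with a
bound on the mixed norm) is equivalent to a bound on the power sum computed in `ℝ≥0∞`. -/
lemma summing_iff_ennreal {κ : ℕ → Type*} (a : ∀ j, κ j → ℝ) (ha : ∀ j k, 0 ≤ a j k)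
    {q₁ q₂ D : ℝ} (hq₁ : 1 ≤ q₁) (hq₂ : 1 ≤ q₂) (hD : 0 ≤ D) :
    ((∀ j, Summable fun k => a j k ^ q₂) ∧
      (Summable fun j => (∑' k, a j k ^ q₂) ^ (q₁ / q₂)) ∧
      (∑' j, (∑' k, a j k ^ q₂) ^ (q₁ / q₂)) ^ (1 / q₁) ≤ D) ↔
    ∑' j, (∑' k, ENNReal.ofReal (a j k) ^ q₂) ^ (q₁ / q₂) ≤ ENNReal.ofReal D ^ q₁ := by
  have hr : 0 < q₁ / q₂ := by positivity
  have hin0 : ∀ j, 0 ≤ ∑' k, a j k ^ q₂ := fun j =>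
    tsum_nonneg fun k => Real.rpow_nonneg (ha j k) _
  have hout0 : ∀ j, 0 ≤ (∑' k, a j k ^ q₂) ^ (q₁ / q₂) := fun j => Real.rpow_nonneg (hin0 j) _
  have hterm : ∀ j k, ENNReal.ofReal (a j k) ^ q₂ = ENNReal.ofReal (a j k ^ q₂) := fun j k =>
    ENNReal.ofReal_rpow_of_nonneg (ha j k) (by linarith)
  have hin : (∀ j, Summable fun k => a j k ^ q₂) → ∀ j,
      (∑' k, ENNReal.ofReal (a j k) ^ q₂) ^ (q₁ / q₂) =
        ENNReal.ofReal ((∑' k, a j k ^ q₂) ^ (q₁ / q₂)) := by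
    intro h j
    simp_rw [hterm]
    rw [← ENNReal.ofReal_tsum_of_nonneg (fun k => Real.rpow_nonneg (ha j k) _) (h j),
      ENNReal.ofReal_rpow_of_nonneg (hin0 j) hr.le]
  have hfin : ∀ A : ℝ, 0 ≤ A → (A ^ (1 / q₁) ≤ D ↔
      ENNReal.ofReal A ≤ ENNReal.ofReal D ^ q₁) := by
    intro A hA
    rw [ENNReal.ofReal_rpow_of_nonneg hD (by linarith),
      ENNReal.ofReal_le_ofReal_iff (Real.rpow_nonneg hD _), one_div,
      Real.rpow_inv_le_iff_of_pos hA hD (by linarith)]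
  constructor
  · rintro ⟨h1, h2, h3⟩
    simp_rw [hin h1]
    rw [← ENNReal.ofReal_tsum_of_nonneg hout0 h2]
    exact (hfin _ (tsum_nonneg hout0)).1 h3
  · intro h
    have htop : ∑' j, (∑' k, ENNReal.ofReal (a j k) ^ q₂) ^ (q₁ / q₂) ≠ ⊤ :=
      ne_top_of_le_ne_top (ENNReal.rpow_ne_top_of_nonneg (by linarith) ENNReal.ofReal_ne_top) h
    have h1 : ∀ j, Summable fun k => a j k ^ q₂ := by
      intro j
      have hj := ENNReal.ne_top_of_tsum_ne_top htop j
      have hj' : ∑' k, ENNReal.ofReal (a j k) ^ q₂ ≠ ⊤ := by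
        intro h0
        rw [h0, ENNReal.top_rpow_of_pos hr] at hj
        exact hj rfl
      refine (ENNReal.summable_toReal hj').congr fun k => ?_
      rw [hterm, ENNReal.toReal_ofReal (Real.rpow_nonneg (ha j k) _)]
    simp_rw [hin h1] at h htop
    have h2 : Summable fun j => (∑' k, a j k ^ q₂) ^ (q₁ / q₂) :=
      (ENNReal.summable_toReal htop).congr fun j => ENNReal.toReal_ofReal (hout0 j)
    rw [← ENNReal.ofReal_tsum_of_nonneg hout0 h2] at h
    exact ⟨h1, h2, (hfin _ (tsum_nonneg hout0)).2 h⟩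

/-- Fatou's lemma for sums, from Fatou's lemma for the counting measure. -/
lemma tsum_liminf_le {ι : Type*} [Countable ι] (f : ℕ → ι → ℝ≥0∞) :
    ∑' i, liminf (fun n => f n i) atTop ≤ liminf (fun n => ∑' i, f n i) atTop := by
  let _ : MeasurableSpace ι := ⊤
  have : MeasurableSingletonClass ι := ⟨fun _ => trivial⟩
  simpa [MeasureTheory.lintegral_count] using
    MeasureTheory.lintegral_liminf_le (μ := MeasureTheory.Measure.count) (f := f)
      fun n => measurable_from_top

lemma ennreal_add_rpow_le {r : ℝ} (hr : 0 ≤ r) (a b : ℝ≥0∞) :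
    (a + b) ^ r ≤ 2 ^ r * (a ^ r + b ^ r) := by
  calc (a + b) ^ r ≤ (2 * max a b) ^ r := by
        refine ENNReal.rpow_le_rpow ?_ hr
        rw [two_mul]
        exact add_le_add (le_max_left _ _) (le_max_right _ _)
    _ = 2 ^ r * (max a b) ^ r := ENNReal.mul_rpow_of_nonneg _ _ hr
    _ ≤ 2 ^ r * (a ^ r + b ^ r) := by
        gcongr
        rcases le_total a b with h | h
        · rw [max_eq_right h]; exact le_add_self
        · rw [max_eq_left h]; exact le_self_add

/-! ### Summing bounds -/

/-- The `q₁`-th power of the mixed norm on the left of the summing inequality, as an extended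
nonnegative real. -/
noncomputable def mixedSum (q₁ q₂ : ℝ) (B : Set (ℕ × ℕ)) (S : E₁ →L[𝕜] E₂ →L[𝕜] F)
    (x : ℕ → E₁) (y : ℕ → E₂) : ℝ≥0∞ :=
  ∑' j, (∑' k : {k : ℕ // (j, k) ∈ B}, ‖S (x j) (y k.1)‖ₑ ^ q₂) ^ (q₁ / q₂)

/-- `C ≥ 0` is an admissible constant in the summing inequality for `S`, expressed in `ℝ≥0∞`. -/
def SummingBound (p₁ p₂ q₁ q₂ : ℝ) (B : Set (ℕ × ℕ)) (S : E₁ →L[𝕜] E₂ →L[𝕜] F) (C : ℝ) : Prop :=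
  0 ≤ C ∧ ∀ (x : ℕ → E₁) (y : ℕ → E₂), WeaklySummable 𝕜 p₁ x → WeaklySummable 𝕜 p₂ y →
    mixedSum q₁ q₂ B S x y ≤ ENNReal.ofReal (C * weakNorm 𝕜 p₁ x * weakNorm 𝕜 p₂ y) ^ q₁

lemma weakNorm_nonneg (p : ℝ) (x : ℕ → E₁) : 0 ≤ weakNorm 𝕜 p x :=
  Real.iSup_nonneg fun _ => Real.rpow_nonneg
    (tsum_nonneg fun _ => Real.rpow_nonneg (norm_nonneg _) _) _

section

variable {p₁ p₂ q₁ q₂ : ℝ} {B : Set (ℕ × ℕ)} {S S' : E₁ →L[𝕜] E₂ →L[𝕜] F} {C C' : ℝ}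

lemma summingBound_iff (hq₁ : 1 ≤ q₁) (hq₂ : 1 ≤ q₂) :
    SummingBound p₁ p₂ q₁ q₂ B S C ↔ 0 ≤ C ∧ ∀ (x : ℕ → E₁) (y : ℕ → E₂),
      WeaklySummable 𝕜 p₁ x → WeaklySummable 𝕜 p₂ y →
      (∀ j, Summable fun k : {k : ℕ // (j, k) ∈ B} => ‖S (x j) (y k.1)‖ ^ q₂) ∧
      (Summable fun j =>
        (∑' k : {k : ℕ // (j, k) ∈ B}, ‖S (x j) (y k.1)‖ ^ q₂) ^ (q₁ / q₂)) ∧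
      (∑' j, (∑' k : {k : ℕ // (j, k) ∈ B}, ‖S (x j) (y k.1)‖ ^ q₂) ^ (q₁ / q₂)) ^ (1 / q₁)
        ≤ C * weakNorm 𝕜 p₁ x * weakNorm 𝕜 p₂ y := by
  refine and_congr_right fun hC => forall₄_congr fun x y _ _ => ?_
  rw [summing_iff_ennreal (κ := fun j => {k : ℕ // (j, k) ∈ B})
    (fun j k => ‖S (x j) (y k.1)‖) (fun _ _ => norm_nonneg _) hq₁ hq₂
    (mul_nonneg (mul_nonneg hC (weakNorm_nonneg _ _)) (weakNorm_nonneg _ _))]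
  simp only [mixedSum, ofReal_norm]

lemma isSumming_iff (hq₁ : 1 ≤ q₁) (hq₂ : 1 ≤ q₂) :
    IsSumming p₁ p₂ q₁ q₂ B S ↔ ∃ C, SummingBound p₁ p₂ q₁ q₂ B S C :=
  exists_congr fun _ => (summingBound_iff hq₁ hq₂).symm

lemma summingNorm_eq (hq₁ : 1 ≤ q₁) (hq₂ : 1 ≤ q₂) :
    summingNorm p₁ p₂ q₁ q₂ B S = sInf {C | SummingBound p₁ p₂ q₁ q₂ B S C} :=
  congrArg sInf (Set.ext fun _ => (summingBound_iff hq₁ hq₂).symm)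

lemma summingNorm_nonneg (hq₁ : 1 ≤ q₁) (hq₂ : 1 ≤ q₂) : 0 ≤ summingNorm p₁ p₂ q₁ q₂ B S := by
  rw [summingNorm_eq hq₁ hq₂]
  exact Real.sInf_nonneg fun _ h => h.1

lemma SummingBound.summingNorm_le (hq₁ : 1 ≤ q₁) (hq₂ : 1 ≤ q₂)
    (h : SummingBound p₁ p₂ q₁ q₂ B S C) : summingNorm p₁ p₂ q₁ q₂ B S ≤ C := by
  rw [summingNorm_eq hq₁ hq₂]
  exact csInf_le ⟨0, fun _ h => h.1⟩ h

lemma SummingBound.mono (hq₁ : 1 ≤ q₁) (h : SummingBound p₁ p₂ q₁ q₂ B S C) (hC : C ≤ C') :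
    SummingBound p₁ p₂ q₁ q₂ B S C' := by
  refine ⟨h.1.trans hC, fun x y hx hy => (h.2 x y hx hy).trans ?_⟩
  have := weakNorm_nonneg (𝕜 := 𝕜) p₁ x
  have := weakNorm_nonneg (𝕜 := 𝕜) p₂ y
  exact ENNReal.rpow_le_rpow (ENNReal.ofReal_le_ofReal (by gcongr)) (by linarith)

lemma IsSumming.bound_of_lt (hq₁ : 1 ≤ q₁) (hq₂ : 1 ≤ q₂)
    (h : IsSumming p₁ p₂ q₁ q₂ B S) (hC : summingNorm p₁ p₂ q₁ q₂ B S < C) :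
    SummingBound p₁ p₂ q₁ q₂ B S C := by
  rw [summingNorm_eq hq₁ hq₂] at hC
  obtain ⟨D, hD, hDC⟩ := exists_lt_of_csInf_lt ((isSumming_iff hq₁ hq₂).1 h) hC
  exact SummingBound.mono hq₁ hD hDC.le

lemma SummingBound.neg (h : SummingBound p₁ p₂ q₁ q₂ B S C) :
    SummingBound p₁ p₂ q₁ q₂ B (-S) C := by
  simpa [SummingBound, mixedSum] using h

lemma weaklySummable_single_and_weakNorm_le {p : ℝ} (hp : 1 ≤ p) (j : ℕ) (u : E₁) :
    WeaklySummable 𝕜 p (Pi.single j u : ℕ → E₁) ∧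
      weakNorm 𝕜 p (Pi.single j u : ℕ → E₁) ≤ ‖u‖ := by
  have hz : ∀ φ : E₁ →L[𝕜] 𝕜, ∀ i, i ≠ j → ‖φ ((Pi.single j u : ℕ → E₁) i)‖ ^ p = 0 := by
    intro φ i hi
    rw [Pi.single_eq_of_ne hi, map_zero, norm_zero, Real.zero_rpow (by linarith)]
  refine ⟨fun φ => (hasSum_single j (hz φ)).summable, ?_⟩
  have : Nonempty {φ : E₁ →L[𝕜] 𝕜 // ‖φ‖ ≤ 1} := ⟨⟨0, by simp⟩⟩
  refine ciSup_le fun φ => ?_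
  rw [tsum_eq_single j (hz φ.1), Pi.single_eq_same, one_div,
    Real.rpow_rpow_inv (norm_nonneg _) (by linarith)]
  simpa using φ.1.le_of_opNorm_le φ.2 u

/-- The operator norm is dominated by every summing bound: test on sequences supported at the
coordinates of a single point of `B`. -/
lemma SummingBound.opNorm_le (hp₁ : 1 ≤ p₁) (hp₂ : 1 ≤ p₂) (hq₁ : 1 ≤ q₁) (hq₂ : 1 ≤ q₂)
    (hB : B.Nonempty) (h : SummingBound p₁ p₂ q₁ q₂ B S C) : ‖S‖ ≤ C := by
  obtain ⟨⟨j, k⟩, hjk⟩ := hB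
  refine S.opNorm_le_bound₂ h.1 fun u v => ?_
  obtain ⟨hx, hx'⟩ := weaklySummable_single_and_weakNorm_le (𝕜 := 𝕜) hp₁ j u
  obtain ⟨hy, hy'⟩ := weaklySummable_single_and_weakNorm_le (𝕜 := 𝕜) hp₂ k v
  have hC := h.1
  have h0 := weakNorm_nonneg (𝕜 := 𝕜) p₁ (Pi.single j u : ℕ → E₁)
  have h0' := weakNorm_nonneg (𝕜 := 𝕜) p₂ (Pi.single k v : ℕ → E₂)
  have hr : 0 ≤ q₁ / q₂ := by positivity
  have key : ‖S u v‖ₑ ^ q₁ ≤ ENNReal.ofReal (C * ‖u‖ * ‖v‖) ^ q₁ := by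
    calc ‖S u v‖ₑ ^ q₁ = (‖S u v‖ₑ ^ q₂) ^ (q₁ / q₂) := by
          rw [← ENNReal.rpow_mul, mul_div_cancel₀ _ (by linarith)]
      _ ≤ (∑' k' : {k : ℕ // (j, k) ∈ B},
            ‖S ((Pi.single j u : ℕ → E₁) j) ((Pi.single k v : ℕ → E₂) k'.1)‖ₑ ^ q₂)
              ^ (q₁ / q₂) := by
          refine ENNReal.rpow_le_rpow ?_ hr
          refine le_of_eq_of_le ?_ (ENNReal.le_tsum ⟨k, hjk⟩)
          simp
      _ ≤ mixedSum q₁ q₂ B S (Pi.single j u) (Pi.single k v) :=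
          ENNReal.le_tsum (f := fun j' => (∑' k' : {k : ℕ // (j', k) ∈ B},
            ‖S ((Pi.single j u : ℕ → E₁) j') ((Pi.single k v : ℕ → E₂) k'.1)‖ₑ ^ q₂)
              ^ (q₁ / q₂)) j
      _ ≤ _ := h.2 _ _ hx hy
      _ ≤ _ := ENNReal.rpow_le_rpow (ENNReal.ofReal_le_ofReal (by gcongr)) (by linarith)
  rw [ENNReal.rpow_le_rpow_iff (by linarith), ← ofReal_norm,
    ENNReal.ofReal_le_ofReal_iff (by positivity)] at key
  exact key

/-- Admissibility of a constant passes to operator-norm limits, by Fatou's lemma applied to the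
inner and to the outer sum. -/
lemma SummingBound.of_tendsto (hq₁ : 1 ≤ q₁) (hq₂ : 1 ≤ q₂) {R : ℕ → E₁ →L[𝕜] E₂ →L[𝕜] F}
    (hR : Tendsto R atTop (𝓝 S)) (hC : 0 ≤ C)
    (h : ∀ᶠ l in atTop, SummingBound p₁ p₂ q₁ q₂ B (R l) C) :
    SummingBound p₁ p₂ q₁ q₂ B S C := by
  refine ⟨hC, fun x y hx hy => ?_⟩
  have hr : 0 < q₁ / q₂ := by positivity
  have hpt : ∀ u v, Tendsto (fun l => ‖R l u v‖ₑ ^ q₂) atTop (𝓝 (‖S u v‖ₑ ^ q₂)) := by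
    intro u v
    have h1 : Tendsto (fun l => R l u v) atTop (𝓝 (S u v)) := by
      have hc : Continuous fun A : E₁ →L[𝕜] E₂ →L[𝕜] F => A u v := by fun_prop
      exact (hc.tendsto S).comp hR
    exact ((ENNReal.continuous_rpow_const (y := q₂)).tendsto _).comp h1.enorm
  calc mixedSum q₁ q₂ B S x y
      = ∑' j, (∑' k : {k : ℕ // (j, k) ∈ B},
          liminf (fun l => ‖R l (x j) (y k.1)‖ₑ ^ q₂) atTop) ^ (q₁ / q₂) := by
        simp only [mixedSum, (hpt _ _).liminf_eq]
    _ ≤ ∑' j, liminf (fun l => (∑' k : {k : ℕ // (j, k) ∈ B},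
          ‖R l (x j) (y k.1)‖ₑ ^ q₂) ^ (q₁ / q₂)) atTop := by
        refine ENNReal.tsum_le_tsum fun j => ?_
        have := (ENNReal.orderIsoRpow (q₁ / q₂) hr).liminf_apply (f := atTop)
          (u := fun l => ∑' k : {k : ℕ // (j, k) ∈ B}, ‖R l (x j) (y k.1)‖ₑ ^ q₂)
        simp only [ENNReal.orderIsoRpow_apply] at this
        rw [← this]
        exact ENNReal.rpow_le_rpow (tsum_liminf_le _) hr.le
    _ ≤ liminf (fun l => mixedSum q₁ q₂ B (R l) x y) atTop := tsum_liminf_le _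
    _ ≤ _ := by
        refine liminf_le_of_frequently_le' (Eventually.frequently ?_)
        filter_upwards [h] with l hl using hl.2 x y hx hy

lemma mixedSum_add_le (hq₁ : 1 ≤ q₁) (hq₂ : 1 ≤ q₂) (x : ℕ → E₁) (y : ℕ → E₂) :
    mixedSum q₁ q₂ B (S + S') x y ≤ (2 ^ q₂) ^ (q₁ / q₂) * 2 ^ (q₁ / q₂) *
      (mixedSum q₁ q₂ B S x y + mixedSum q₁ q₂ B S' x y) := by
  have hr : 0 ≤ q₁ / q₂ := by positivity
  simp only [mixedSum]
  rw [← ENNReal.tsum_add, ← ENNReal.tsum_mul_left]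
  refine ENNReal.tsum_le_tsum fun j => ?_
  rw [mul_assoc]
  refine le_trans ?_ (mul_le_mul_right (ennreal_add_rpow_le hr _ _) _)
  rw [← ENNReal.mul_rpow_of_nonneg _ _ hr, ← ENNReal.tsum_add, ← ENNReal.tsum_mul_left]
  refine ENNReal.rpow_le_rpow (ENNReal.tsum_le_tsum fun k => ?_) hr
  refine le_trans ?_ (ennreal_add_rpow_le (by linarith) _ _)
  exact ENNReal.rpow_le_rpow (by simpa using enorm_add_le _ _) (by linarith)

/-- Sums of operators with summing bounds have a summing bound; the constant is not sharp. -/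
lemma SummingBound.add (hq₁ : 1 ≤ q₁) (hq₂ : 1 ≤ q₂) (h : SummingBound p₁ p₂ q₁ q₂ B S C)
    (h' : SummingBound p₁ p₂ q₁ q₂ B S' C') :
    ∃ D, SummingBound p₁ p₂ q₁ q₂ B (S + S') D := by
  have hr : 0 ≤ q₁ / q₂ := by positivity
  have hq0 : 0 < q₁ := by linarith
  obtain ⟨K, hK⟩ : ∃ K : ℝ≥0∞, K = (2 ^ q₂) ^ (q₁ / q₂) * 2 ^ (q₁ / q₂) * 2 := ⟨_, rfl⟩
  have hKtop : K ^ (1 / q₁) ≠ ⊤ := by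
    refine ENNReal.rpow_ne_top_of_nonneg (by positivity) ?_
    rw [hK]
    exact ENNReal.mul_ne_top (ENNReal.mul_ne_top
      (ENNReal.rpow_ne_top_of_nonneg hr
        (ENNReal.rpow_ne_top_of_nonneg (by linarith) ENNReal.ofNat_ne_top))
      (ENNReal.rpow_ne_top_of_nonneg hr ENNReal.ofNat_ne_top)) ENNReal.ofNat_ne_top
  have h1 := h.mono hq₁ (le_add_of_nonneg_right h'.1)
  have h2 := h'.mono hq₁ (le_add_of_nonneg_left h.1)
  refine ⟨(K ^ (1 / q₁)).toReal * (C + C'), mul_nonneg ENNReal.toReal_nonneg h1.1,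
    fun x y hx hy => (mixedSum_add_le hq₁ hq₂ x y).trans ?_⟩
  rw [mul_assoc (_ * _) (weakNorm 𝕜 p₁ x), mul_assoc (ENNReal.toReal _),
    ENNReal.ofReal_mul ENNReal.toReal_nonneg, ENNReal.ofReal_toReal hKtop,
    ENNReal.mul_rpow_of_nonneg _ _ hq0.le, one_div, ENNReal.rpow_inv_rpow hq0.ne', hK,
    mul_assoc _ 2, two_mul, ← mul_assoc (C + C')]
  gcongr
  · exact h1.2 x y hx hy
  · exact h2.2 x y hx hy

end

/-- the class of summing bilinear operators is complete for the summing
norm `π`: every `π`-Cauchy sequence of summing operators `π`-converges to a summing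
operator. -/
theorem statement3 [CompleteSpace E₁] [CompleteSpace E₂] [CompleteSpace F]
    (p₁ p₂ q₁ q₂ : ℝ) (hp₁ : 1 ≤ p₁) (hp₂ : 1 ≤ p₂) (hq₁ : 1 ≤ q₁) (hq₂ : 1 ≤ q₂)
    (B : Set (ℕ × ℕ)) (hB : B.Nonempty)
    (T : ℕ → (E₁ →L[𝕜] E₂ →L[𝕜] F))
    (hsum : ∀ m, IsSumming p₁ p₂ q₁ q₂ B (T m))
    (hcauchy : ∀ ε : ℝ, 0 < ε → ∃ N : ℕ, ∀ m l, N ≤ m → N ≤ l →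
      IsSumming p₁ p₂ q₁ q₂ B (T m - T l) ∧
        summingNorm p₁ p₂ q₁ q₂ B (T m - T l) ≤ ε) :
    ∃ T₀ : E₁ →L[𝕜] E₂ →L[𝕜] F, IsSumming p₁ p₂ q₁ q₂ B T₀ ∧
      Filter.Tendsto (fun m => summingNorm p₁ p₂ q₁ q₂ B (T m - T₀))
        Filter.atTop (nhds 0) := by
  have hbound : ∀ ε : ℝ, 0 < ε → ∃ N : ℕ, ∀ m l, N ≤ m → N ≤ l →
      SummingBound p₁ p₂ q₁ q₂ B (T m - T l) ε := by
    intro ε hε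
    obtain ⟨N, hN⟩ := hcauchy (ε / 2) (by positivity)
    exact ⟨N, fun m l hm hl => (hN m l hm hl).1.bound_of_lt hq₁ hq₂
      ((hN m l hm hl).2.trans_lt (half_lt_self hε))⟩
  have hT : CauchySeq T := by
    refine (Metric.cauchySeq_iff (u := T)).2 ?_
    intro ε hε
    obtain ⟨N, hN⟩ := hbound (ε / 2) (by positivity)
    refine ⟨N, fun m hm l hl => ?_⟩
    refine (dist_eq_norm (T m) (T l)).trans_lt ?_
    exact ((hN m l hm hl).opNorm_le hp₁ hp₂ hq₁ hq₂ hB).trans_lt (half_lt_self hε)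
  obtain ⟨T₀, hT₀⟩ := cauchySeq_tendsto_of_complete hT
  have hlim : ∀ ε : ℝ, 0 < ε → ∃ N : ℕ, ∀ m, N ≤ m →
      SummingBound p₁ p₂ q₁ q₂ B (T m - T₀) ε := by
    intro ε hε
    obtain ⟨N, hN⟩ := hbound ε hε
    refine ⟨N, fun m hm => SummingBound.of_tendsto hq₁ hq₂
      (tendsto_const_nhds.sub hT₀) hε.le ?_⟩
    filter_upwards [eventually_ge_atTop N] with l hl using hN m l hm hl
  refine ⟨T₀, ?_, ?_⟩
  · obtain ⟨N, hN⟩ := hlim 1 one_pos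
    obtain ⟨C, hC⟩ := (isSumming_iff hq₁ hq₂).1 (hsum N)
    have := (hN N le_rfl).neg.add hq₁ hq₂ hC
    rw [neg_sub, sub_add_cancel] at this
    exact (isSumming_iff hq₁ hq₂).2 this
  · rw [Metric.tendsto_atTop]
    intro ε hε
    obtain ⟨N, hN⟩ := hlim (ε / 2) (by positivity)
    refine ⟨N, fun m hm => ?_⟩
    rw [Real.dist_0_eq_abs, abs_of_nonneg (summingNorm_nonneg hq₁ hq₂)]
    exact ((hN m hm).summingNorm_le hq₁ hq₂).trans_lt (half_lt_self hε)
end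

section
/- Let 1 ≤ p₁ ≤ q₁ < ∞ and 1 ≤ p₂ ≤ q₂ < ∞, let B ⊆ ℕ × ℕ be a block, let E₁, E₂, F be Banach spaces, let φ₁ ∈ E₁*, φ₂ ∈ E₂* be continuous linear functionals and b ∈ F, and let T : E₁ × E₂ → F be the finite type bilinear operator T(x,y) = φ₁(x)·φ₂(y)·b. Then for every weakly p₁-summable sequence (x_j) in E₁ and every weakly p₂-summable sequence (y_k) in E₂ one has ( Σ_{j=0}^∞ ( Σ_{k ∈ B^j} ‖T(x_j, y_k)‖^{q₂} )^{q₁/q₂} )^{1/q₁} ≤ ‖φ₁‖ · ‖φ₂‖ · ‖b‖ · ‖(x_j)‖_{w,p₁} · ‖(y_k)‖_{w,p₂}; moreover, ‖φ₁‖ · ‖φ₂‖ · ‖b‖ is the least constant C ≥ 0 for which this inequality holds for all such sequences. -/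
/-- The inclusion `ℓ_p ⊆ ℓ_q` for `p ≤ q` has norm at most one: with `S = ∑ f ^ p` one has
`f i ^ p ≤ S`, hence `f i ^ q ≤ S ^ ((q - p) / p) * f i ^ p`, and summing over `i` gives
`∑ f ^ q ≤ S ^ (q / p)`. -/
theorem summable_rpow_of_le {ι : Type*} {f : ι → ℝ} (hf : ∀ i, 0 ≤ f i) {p q : ℝ}
    (hp : 1 ≤ p) (hpq : p ≤ q) (hs : Summable fun i => f i ^ p) :
    (Summable fun i => f i ^ q) ∧
      (∑' i, f i ^ q) ^ (1 / q) ≤ (∑' i, f i ^ p) ^ (1 / p) := by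
  have hp0 : 0 < p := by linarith
  have hq0 : 0 < q := by linarith
  set S := ∑' i, f i ^ p with hS
  have hS0 : 0 ≤ S := tsum_nonneg fun i => Real.rpow_nonneg (hf i) p
  have key : ∀ i, f i ^ q ≤ S ^ ((q - p) / p) * f i ^ p := by
    intro i
    have h1 : f i ^ p ≤ S := hs.le_tsum i fun j _ => Real.rpow_nonneg (hf j) p
    have h2 : f i ^ q = (f i ^ p) ^ ((q - p) / p) * f i ^ p := by
      rcases (hf i).eq_or_lt with h | h
      · rw [← h, Real.zero_rpow hp0.ne', Real.zero_rpow hq0.ne', mul_zero]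
      · rw [← Real.rpow_mul h.le, mul_div_cancel₀ _ hp0.ne', ← Real.rpow_add h, sub_add_cancel]
    rw [h2]
    have := Real.rpow_nonneg (hf i) p
    gcongr
  have hsq : Summable fun i => f i ^ q :=
    Summable.of_nonneg_of_le (fun i => Real.rpow_nonneg (hf i) q) key (hs.mul_left _)
  refine ⟨hsq, ?_⟩
  have h3 : ∑' i, f i ^ q ≤ S ^ (q / p) := by
    refine (hsq.tsum_le_tsum key (hs.mul_left _)).trans ?_
    rw [tsum_mul_left, ← hS]
    rcases hS0.eq_or_lt with h | h
    · rw [← h, mul_zero, Real.zero_rpow (by positivity)]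
    · refine le_of_eq ?_
      nth_rewrite 2 [← Real.rpow_one S]
      rw [← Real.rpow_add h]
      congr 1
      field_simp
      ring
  calc (∑' i, f i ^ q) ^ (1 / q) ≤ (S ^ (q / p)) ^ (1 / q) :=
        Real.rpow_le_rpow (tsum_nonneg fun i => Real.rpow_nonneg (hf i) q) h3 (by positivity)
    _ = S ^ (1 / p) := by
        rw [← Real.rpow_mul hS0]
        congr 1
        field_simp

/-- The supremum defining `weakNorm` is finite: the linear map `φ ↦ (φ (x j))_j` from the dual to
`ℓ_p` has closed graph, because convergence in `ℓ_p` implies coordinatewise convergence, so it is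
bounded. -/
theorem weakNorm_bddAbove {𝕜 E : Type*} [RCLike 𝕜] [NormedAddCommGroup E] [NormedSpace 𝕜 E]
    {p : ℝ} (hp : 1 ≤ p) {x : ℕ → E} (hx : WeaklySummable 𝕜 p x) :
    BddAbove (Set.range fun φ : {φ : E →L[𝕜] 𝕜 // ‖φ‖ ≤ 1} =>
      (∑' j, ‖φ.1 (x j)‖ ^ p) ^ (1 / p)) := by
  have hp0 : 0 < p := by linarith
  have : Fact (1 ≤ ENNReal.ofReal p) := ⟨by simpa using hp⟩
  have hpr : (ENNReal.ofReal p).toReal = p := ENNReal.toReal_ofReal hp0.le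
  have hpr0 : 0 < (ENNReal.ofReal p).toReal := by rwa [hpr]
  let L : (E →L[𝕜] 𝕜) →ₗ[𝕜] lp (fun _ : ℕ => 𝕜) (ENNReal.ofReal p) :=
    { toFun := fun φ => ⟨fun j => φ (x j), memℓp_gen (by rw [hpr]; exact hx φ)⟩
      map_add' := fun _ _ => rfl
      map_smul' := fun _ _ => rfl }
  have hL : ∀ φ, ‖L φ‖ = (∑' j, ‖φ (x j)‖ ^ p) ^ (1 / p) := by
    intro φ
    rw [lp.norm_eq_tsum_rpow hpr0, hpr]
    rfl
  have hcont : Continuous L := by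
    refine L.continuous_of_seq_closed_graph fun u φ y hu hLu => lp.ext (funext fun j => ?_)
    have h1 : Filter.Tendsto (fun n => u n (x j)) Filter.atTop (nhds (φ (x j))) :=
      ((ContinuousLinearMap.apply 𝕜 𝕜 (x j)).continuous.tendsto φ).comp hu
    have h2 : Filter.Tendsto (fun n => u n (x j)) Filter.atTop (nhds (y j)) := by
      rw [tendsto_iff_norm_sub_tendsto_zero] at hLu ⊢
      refine squeeze_zero (fun _ => norm_nonneg _) (fun n => ?_) hLu
      exact lp.norm_apply_le_norm (ENNReal.toReal_pos_iff.1 hpr0).1.ne' (L (u n) - y) j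
    exact tendsto_nhds_unique h2 h1
  let L' : (E →L[𝕜] 𝕜) →L[𝕜] lp (fun _ : ℕ => 𝕜) (ENNReal.ofReal p) := ⟨L, hcont⟩
  refine ⟨‖L'‖, ?_⟩
  rintro _ ⟨⟨φ, hφ⟩, rfl⟩
  change (∑' j, ‖φ (x j)‖ ^ p) ^ (1 / p) ≤ ‖L'‖
  rw [← hL]
  exact L'.unit_le_opNorm φ hφ

theorem weakNorm_nonneg_s7 {𝕜 E : Type*} [RCLike 𝕜] [NormedAddCommGroup E] [NormedSpace 𝕜 E]
    (p : ℝ) (x : ℕ → E) : 0 ≤ weakNorm 𝕜 p x :=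
  Real.iSup_nonneg fun _ => Real.rpow_nonneg (tsum_nonneg fun _ => by positivity) _

/-- Homogeneity turns the supremum over the unit ball into a bound for every functional. -/
theorem le_norm_mul_weakNorm {𝕜 E : Type*} [RCLike 𝕜] [NormedAddCommGroup E] [NormedSpace 𝕜 E]
    {p : ℝ} (hp : 1 ≤ p) {x : ℕ → E} (hx : WeaklySummable 𝕜 p x) (φ : E →L[𝕜] 𝕜) :
    (∑' j, ‖φ (x j)‖ ^ p) ^ (1 / p) ≤ ‖φ‖ * weakNorm 𝕜 p x := by
  have hp0 : 0 < p := by linarith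
  rcases eq_or_ne φ 0 with rfl | hφ
  · simp [Real.zero_rpow hp0.ne', Real.zero_rpow (inv_pos.2 hp0).ne']
  have hn : 0 < ‖φ‖ := norm_pos_iff.2 hφ
  have h1 : ‖((‖φ‖⁻¹ : ℝ) : 𝕜) • φ‖ ≤ 1 := by
    rw [norm_smul, RCLike.norm_ofReal, abs_of_pos (by positivity), inv_mul_cancel₀ hn.ne']
  have h2 := le_ciSup (weakNorm_bddAbove hp hx) ⟨((‖φ‖⁻¹ : ℝ) : 𝕜) • φ, h1⟩
  have h3 : ∀ j, ‖(((‖φ‖⁻¹ : ℝ) : 𝕜) • φ) (x j)‖ ^ p = (‖φ‖⁻¹) ^ p * ‖φ (x j)‖ ^ p := by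
    intro j
    rw [smul_apply, norm_smul, RCLike.norm_ofReal,
      abs_of_pos (by positivity), Real.mul_rpow (by positivity) (by positivity)]
  simp only [h3, tsum_mul_left] at h2
  rw [Real.mul_rpow (by positivity) (tsum_nonneg fun j => by positivity), one_div,
    Real.rpow_rpow_inv (by positivity) hp0.ne', inv_mul_le_iff₀ hn] at h2
  simpa only [weakNorm, one_div] using h2

theorem weakSummable_single {𝕜 E : Type*} [RCLike 𝕜] [NormedAddCommGroup E] [NormedSpace 𝕜 E]
    {p : ℝ} (hp : 1 ≤ p) (i : ℕ) (u : E) : WeaklySummable 𝕜 p (Pi.single i u) := by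
  intro φ
  refine summable_of_ne_finset_zero (s := {i}) fun j hj => ?_
  have hj' : j ≠ i := by simpa using hj
  simp [Pi.single_eq_of_ne hj', Real.zero_rpow (by linarith : p ≠ 0)]

theorem weakNorm_single_le {𝕜 E : Type*} [RCLike 𝕜] [NormedAddCommGroup E] [NormedSpace 𝕜 E]
    {p : ℝ} (hp : 1 ≤ p) (i : ℕ) (u : E) : weakNorm 𝕜 p (Pi.single i u) ≤ ‖u‖ := by
  have hp0 : p ≠ 0 := by linarith
  refine Real.iSup_le (fun φ => ?_) (norm_nonneg u)
  rw [tsum_eq_single i fun j hj => by simp [Pi.single_eq_of_ne hj, Real.zero_rpow hp0],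
    Pi.single_eq_same, one_div, Real.rpow_rpow_inv (norm_nonneg _) hp0]
  exact φ.1.le_of_opNorm_le φ.2 u |>.trans (one_mul _).le

/-- for the finite type bilinear operator `T(x,y) = φ₁(x)·φ₂(y)·b`, the
block-summing inequality holds with constant `‖φ₁‖·‖φ₂‖·‖b‖`, and this is the least
such constant. -/
theorem statement7 {𝕜 E₁ E₂ F : Type*} [RCLike 𝕜]
    [NormedAddCommGroup E₁] [NormedSpace 𝕜 E₁] [CompleteSpace E₁]
    [NormedAddCommGroup E₂] [NormedSpace 𝕜 E₂] [CompleteSpace E₂]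
    [NormedAddCommGroup F] [NormedSpace 𝕜 F] [CompleteSpace F]
    (p₁ p₂ q₁ q₂ : ℝ) (hp₁ : 1 ≤ p₁) (hp₁q₁ : p₁ ≤ q₁)
    (hp₂ : 1 ≤ p₂) (hp₂q₂ : p₂ ≤ q₂)
    (B : Set (ℕ × ℕ)) (hB : B.Nonempty)
    (φ₁ : E₁ →L[𝕜] 𝕜) (φ₂ : E₂ →L[𝕜] 𝕜) (b : F) :
    (∀ (x : ℕ → E₁) (y : ℕ → E₂),
      WeaklySummable 𝕜 p₁ x → WeaklySummable 𝕜 p₂ y →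
      (∀ j, Summable fun k : {k : ℕ // (j, k) ∈ B} => ‖φ₁ (x j) • φ₂ (y k.1) • b‖ ^ q₂) ∧
        (Summable fun j =>
          (∑' k : {k : ℕ // (j, k) ∈ B}, ‖φ₁ (x j) • φ₂ (y k.1) • b‖ ^ q₂) ^ (q₁ / q₂)) ∧
        (∑' j, (∑' k : {k : ℕ // (j, k) ∈ B},
            ‖φ₁ (x j) • φ₂ (y k.1) • b‖ ^ q₂) ^ (q₁ / q₂)) ^ (1 / q₁)
          ≤ ‖φ₁‖ * ‖φ₂‖ * ‖b‖ * weakNorm 𝕜 p₁ x * weakNorm 𝕜 p₂ y) ∧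
    (∀ C : ℝ, 0 ≤ C →
      (∀ (x : ℕ → E₁) (y : ℕ → E₂),
        WeaklySummable 𝕜 p₁ x → WeaklySummable 𝕜 p₂ y →
        (∑' j, (∑' k : {k : ℕ // (j, k) ∈ B},
            ‖φ₁ (x j) • φ₂ (y k.1) • b‖ ^ q₂) ^ (q₁ / q₂)) ^ (1 / q₁)
          ≤ C * weakNorm 𝕜 p₁ x * weakNorm 𝕜 p₂ y) →
      ‖φ₁‖ * ‖φ₂‖ * ‖b‖ ≤ C) := by
  have hq₁0 : 0 < q₁ := by linarith
  have hq₂0 : 0 < q₂ := by linarith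
  have hnorm : ∀ (s t : 𝕜), ‖s • t • b‖ = ‖s‖ * ‖b‖ * ‖t‖ := by
    intro s t
    rw [norm_smul, norm_smul]
    ring
  constructor
  · intro x y hx hy
    obtain ⟨hsx, hlx⟩ := summable_rpow_of_le (fun j => norm_nonneg (φ₁ (x j))) hp₁ hp₁q₁ (hx φ₁)
    obtain ⟨hsy, hly⟩ := summable_rpow_of_le (fun j => norm_nonneg (φ₂ (y j))) hp₂ hp₂q₂ (hy φ₂)
    replace hlx := hlx.trans (le_norm_mul_weakNorm hp₁ hx φ₁)
    replace hly := hly.trans (le_norm_mul_weakNorm hp₂ hy φ₂)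
    have hw₁ := weakNorm_nonneg_s7 (𝕜 := 𝕜) p₁ x
    have hw₂ := weakNorm_nonneg_s7 (𝕜 := 𝕜) p₂ y
    set M := ‖b‖ * (‖φ₂‖ * weakNorm 𝕜 p₂ y) with hM
    have hM0 : 0 ≤ M := by positivity
    have hterm : ∀ j k, ‖φ₁ (x j) • φ₂ (y k) • b‖ ^ q₂ =
        (‖φ₁ (x j)‖ * ‖b‖) ^ q₂ * ‖φ₂ (y k)‖ ^ q₂ := by
      intro j k
      rw [hnorm, Real.mul_rpow (by positivity) (by positivity)]
    have hsB : ∀ j, Summable fun k : {k : ℕ // (j, k) ∈ B} => ‖φ₂ (y k.1)‖ ^ q₂ := fun j =>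
      hsy.comp_injective Subtype.val_injective
    have hrow : ∀ j, (∑' k : {k : ℕ // (j, k) ∈ B}, ‖φ₁ (x j) • φ₂ (y k.1) • b‖ ^ q₂) ^ (q₁ / q₂)
        ≤ M ^ q₁ * ‖φ₁ (x j)‖ ^ q₁ := by
      intro j
      simp only [hterm, tsum_mul_left]
      have hle : ∑' k : {k : ℕ // (j, k) ∈ B}, ‖φ₂ (y k.1)‖ ^ q₂ ≤
          (‖φ₂‖ * weakNorm 𝕜 p₂ y) ^ q₂ := by
        refine ((hsB j).tsum_le_tsum_of_inj Subtype.val Subtype.val_injective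
          (fun _ _ => by positivity) (fun _ => le_rfl) hsy).trans ?_
        rw [one_div] at hly
        exact (Real.rpow_inv_le_iff_of_pos (tsum_nonneg fun _ => by positivity)
          (by positivity) hq₂0).1 hly
      have h0 : 0 ≤ ∑' k : {k : ℕ // (j, k) ∈ B}, ‖φ₂ (y k.1)‖ ^ q₂ :=
        tsum_nonneg fun _ => by positivity
      calc ((‖φ₁ (x j)‖ * ‖b‖) ^ q₂ * ∑' k : {k : ℕ // (j, k) ∈ B}, ‖φ₂ (y k.1)‖ ^ q₂) ^ (q₁ / q₂)
          ≤ ((‖φ₁ (x j)‖ * ‖b‖) ^ q₂ * (‖φ₂‖ * weakNorm 𝕜 p₂ y) ^ q₂) ^ (q₁ / q₂) := by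
            gcongr
        _ = ((M * ‖φ₁ (x j)‖) ^ q₂) ^ (q₁ / q₂) := by
            rw [← Real.mul_rpow (by positivity) (by positivity), hM]
            ring_nf
        _ = M ^ q₁ * ‖φ₁ (x j)‖ ^ q₁ := by
            rw [← Real.rpow_mul (by positivity), mul_div_cancel₀ _ hq₂0.ne',
              Real.mul_rpow hM0 (by positivity)]
    have hrow0 : ∀ j, 0 ≤ (∑' k : {k : ℕ // (j, k) ∈ B},
        ‖φ₁ (x j) • φ₂ (y k.1) • b‖ ^ q₂) ^ (q₁ / q₂) := fun j =>
      Real.rpow_nonneg (tsum_nonneg fun _ => by positivity) _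
    have hsum := Summable.of_nonneg_of_le hrow0 hrow (hsx.mul_left _)
    refine ⟨fun j => ?_, hsum, ?_⟩
    · simp only [hterm]
      exact (hsB j).mul_left _
    · calc _ ≤ (M ^ q₁ * ∑' j, ‖φ₁ (x j)‖ ^ q₁) ^ (1 / q₁) := by
            refine Real.rpow_le_rpow (tsum_nonneg hrow0) ?_ (by positivity)
            rw [← tsum_mul_left]
            exact hsum.tsum_le_tsum hrow (hsx.mul_left _)
        _ = M * (∑' j, ‖φ₁ (x j)‖ ^ q₁) ^ (1 / q₁) := by
            rw [Real.mul_rpow (by positivity) (tsum_nonneg fun _ => by positivity), one_div,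
              Real.rpow_rpow_inv hM0 hq₁0.ne']
        _ ≤ M * (‖φ₁‖ * weakNorm 𝕜 p₁ x) := by gcongr
        _ = _ := by rw [hM]; ring
  · intro C hC h
    obtain ⟨⟨i, l⟩, hil⟩ := hB
    -- Sequences with a single nonzero term, placed at a point of the block, give a bound on `T`.
    have hT : ∀ u v, ‖φ₁ u‖ * ‖b‖ * ‖φ₂ v‖ ≤ C * ‖u‖ * ‖v‖ := by
      intro u v
      have h1 := h (Pi.single i u) (Pi.single l v) (weakSummable_single hp₁ i u)
        (weakSummable_single hp₂ l v)
      rw [tsum_eq_single i, tsum_eq_single ⟨l, hil⟩] at h1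
      · simp only [Pi.single_eq_same] at h1
        rw [← Real.rpow_mul (norm_nonneg _), mul_div_cancel₀ _ hq₂0.ne', one_div,
          Real.rpow_rpow_inv (norm_nonneg _) hq₁0.ne', hnorm] at h1
        refine h1.trans ?_
        have := weakNorm_nonneg_s7 (𝕜 := 𝕜) p₂ (Pi.single l v)
        gcongr
        · exact weakNorm_single_le hp₁ i u
        · exact weakNorm_single_le hp₂ l v
      · intro k hk
        have hk' : k.1 ≠ l := fun e => hk (Subtype.ext e)
        simp [Pi.single_eq_of_ne hk', Real.zero_rpow hq₂0.ne']
      · intro j hj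
        simp [Pi.single_eq_of_ne hj, Real.zero_rpow hq₂0.ne',
          Real.zero_rpow (div_pos hq₁0 hq₂0).ne']
    have h2 : ∀ u, ‖φ₁ u‖ * ‖b‖ * ‖φ₂‖ ≤ C * ‖u‖ := by
      intro u
      have := ContinuousLinearMap.opNorm_le_bound (((‖φ₁ u‖ * ‖b‖ : ℝ) : 𝕜) • φ₂)
        (M := C * ‖u‖) (by positivity) (fun v => by
          rw [smul_apply, norm_smul, RCLike.norm_ofReal,
            abs_of_nonneg (by positivity)]
          exact hT u v)
      rwa [norm_smul, RCLike.norm_ofReal, abs_of_nonneg (by positivity)] at this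
    have := ContinuousLinearMap.opNorm_le_bound (((‖φ₂‖ * ‖b‖ : ℝ) : 𝕜) • φ₁) hC (fun u => by
      rw [smul_apply, norm_smul, RCLike.norm_ofReal,
        abs_of_nonneg (by positivity)]
      linarith [h2 u])
    rw [norm_smul, RCLike.norm_ofReal, abs_of_nonneg (by positivity)] at this
    linarith
end
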